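/- Let (Ω, 𝔉, P) be a probability space, (E, ℰ) a measurable space, ξ : [0,∞) × Ω → E a jointly measurable map, and ν a probability measure on (E, ℰ). Assume that for every bounded measurable H : E × [0,1] × [0,∞) → ℝ such that the pointwise limit H∞(y,u) := lim_{t→∞} H(y,u,t) exists for every y ∈ E and u ∈ [0,1], one has ∫_0^1 H(ξ((1−u)t, ·), u, t) du → ∫_0^1 ∫_E H∞(y,u) ν(dy) du in L²(P) as t → ∞. Then for every nonnegative bounded measurable F : E × [0,1] × [0,∞) → ℝ and every p ≥ 1, writing F̄(y,u) := limsup_{t→∞} F(y,u,t), one has limsup_{t→∞} ‖ ∫_0^1 F(ξ((1−u)t, ·), u, t) du ‖_{L^p(P)} ≤ ∫_0^1 ∫_E F̄(y,u) ν(dy) du. -/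

import Mathlib

open MeasureTheory Filter Real Set

/-!
The idea is to dominate `F` by a function `H` to which the ergodic hypothesis applies and whose
limit is `F̄` almost everywhere. The natural candidate is the decreasing family of tails
`g n (u, y) = sup_{s ≥ n} F y u s`, with `H y u t = g ⌊t⌋ (u, y)`, since `inf_n g n = F̄`.

The hypothesis wants a measurable `H`, and a supremum over uncountably many times need not be
measurable. It is however measurable up to null sets: `{g n > c}` is the projection along the time
axis of a measurable set, and such projections are null measurable for every finite measure
(`nullMeasurable_proj`). For a Polish base this is the universal measurability of analytic sets
(`analytic_nullMeasurable`, from the capacity argument `analytic_inner`). The general base reduces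
to Baire space because a measurable subset of a product involves only countably many measurable
subsets of the base (`exists_baire_factor`). Replacing the `g n` by the upper bound `M` of `F` on
one common null set makes them measurable while keeping them above `F` and decreasing
(`exists_envelope`), and the integral of the limit is unchanged.

Finally, for variables bounded by `M`, the estimate
`X ^ p ≤ (c + ε) ^ p + M ^ p * (X - c) ^ 2 / ε ^ 2` turns `L²` convergence of `X` to a constant
`c ≥ 0` into the bound `limsup ‖X‖_p ≤ c` (`eventually_moment_le`).
-/

/-- Capacity argument: an analytic set is approximated from inside, in measure, by
measurable (in fact closed) sets.
The outer measure is continuous along increasing unions of arbitrary sets, so the coordinates of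
`ℕ → ℕ` can be bounded one after the other while the image keeps outer measure above `r`. The
intersection of the closures of these images is still contained in the range of `f`, because the
sequences obeying all the bounds form a compact set. -/
theorem analytic_inner {α : Type*} [TopologicalSpace α] [PolishSpace α]
    [MeasurableSpace α] [BorelSpace α] (μ : Measure α) [IsFiniteMeasure μ]
    (f : (ℕ → ℕ) → α) (hf : Continuous f) (r : ENNReal) (hr : r < μ (range f)) :
    ∃ L, MeasurableSet L ∧ L ⊆ range f ∧ r ≤ μ L := by
  have step : ∀ (k : ℕ) (B : Set (ℕ → ℕ)), ∃ m : ℕ,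
      r < μ (f '' B) → r < μ (f '' (B ∩ {x | x k ≤ m})) := by
    intro k B
    by_cases hB : r < μ (f '' B)
    · have hU : f '' B = ⋃ m : ℕ, f '' (B ∩ {x | x k ≤ m}) := by
        rw [← image_iUnion, ← inter_iUnion]
        congr 1
        ext x
        simp only [mem_inter_iff, mem_iUnion, mem_ofPred_eq, iff_self_and]
        exact fun _ => ⟨x k, le_rfl⟩
      have hmono : Monotone fun m : ℕ => f '' (B ∩ {x | x k ≤ m}) := by
        intro a b hab
        exact image_mono (inter_subset_inter_right _ fun x hx => le_trans hx hab)
      have hB' := hB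
      rw [hU, hmono.measure_iUnion] at hB'
      obtain ⟨m, hm⟩ := lt_iSup_iff.1 hB'
      exact ⟨m, fun _ => hm⟩
    · exact ⟨0, fun h => absurd h hB⟩
  choose m hm using step
  -- `B k` is the set of sequences obeying the bounds chosen for the first `k` coordinates.
  let B : ℕ → Set (ℕ → ℕ) := fun k => Nat.rec univ (fun k B => B ∩ {x | x k ≤ m k B}) k
  have hBs : ∀ k, B (k + 1) = B k ∩ {x | x k ≤ m k (B k)} := fun k => rfl
  have hBr : ∀ k, r < μ (f '' B k) := by
    intro k
    induction k with
    | zero => simpa [B] using hr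
    | succ k ih => rw [hBs]; exact hm k _ ih
  have hanti : Antitone B := antitone_nat_of_succ_le fun k => by
    rw [hBs]; exact inter_subset_left
  have hBn : ∀ k i, i < k → ∀ x ∈ B k, x i ≤ m i (B i) := by
    intro k i hik x hx
    have := hanti (Nat.succ_le_of_lt hik) hx
    rw [Nat.succ_eq_add_one, hBs] at this
    exact this.2
  refine ⟨⋂ k, closure (f '' B k), .iInter fun k => isClosed_closure.measurableSet, ?_, ?_⟩
  · intro z hz
    let _ := TopologicalSpace.upgradeIsCompletelyMetrizable α
    have hx : ∀ k : ℕ, ∃ x ∈ B k, dist z (f x) < 1 / ((k : ℝ) + 1) := by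
      intro k
      obtain ⟨_, ⟨x, hx, rfl⟩, h⟩ := Metric.mem_closure_iff.1 (mem_iInter.1 hz k) _
        (Nat.one_div_pos_of_nat (α := ℝ) (n := k))
      exact ⟨x, hx, h⟩
    choose x hxB hxz using hx
    -- Truncating `x k` at the bounds lands in a compact set and, as `x k ∈ B k`, does not change
    -- the first `k` coordinates, so a limit of the truncations is also a limit of the `x k`.
    have hcomp : IsCompact (Set.pi univ fun i => Set.Iic (m i (B i))) :=
      isCompact_univ_pi fun i => (Set.finite_Iic _).isCompact
    obtain ⟨y, -, φ, hφ, hlim⟩ := hcomp.tendsto_subseq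
      (x := fun k i => min (x k i) (m i (B i))) (fun k i _ => mem_Iic.2 (min_le_right _ _))
    have hlim' : Tendsto (fun k => x (φ k)) atTop (nhds y) := by
      rw [tendsto_pi_nhds] at hlim ⊢
      intro i
      refine (hlim i).congr' ?_
      filter_upwards [hφ.tendsto_atTop.eventually_gt_atTop i] with k hk
      exact min_eq_left (hBn _ _ hk _ (hxB _))
    have h1 : Tendsto (fun k => f (x (φ k))) atTop (nhds (f y)) := (hf.tendsto y).comp hlim'
    have h2 : Tendsto (fun k => f (x k)) atTop (nhds z) := by
      rw [tendsto_iff_dist_tendsto_zero]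
      refine squeeze_zero (fun _ => dist_nonneg) (fun k => ?_)
        (tendsto_one_div_add_atTop_nhds_zero_nat (𝕜 := ℝ))
      rw [dist_comm]; exact (hxz k).le
    exact ⟨y, tendsto_nhds_unique h1 (h2.comp hφ.tendsto_atTop)⟩
  · have hanti' : Antitone fun k => closure (f '' B k) :=
      fun a b hab => closure_mono (image_mono (hanti hab))
    rw [hanti'.measure_iInter (fun k => isClosed_closure.measurableSet.nullMeasurableSet)
      ⟨0, measure_ne_top _ _⟩]
    exact le_iInf fun k => (hBr k).le.trans (measure_mono subset_closure)

/-- Analytic sets are universally measurable. -/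
theorem analytic_nullMeasurable {α : Type*} [TopologicalSpace α] [PolishSpace α]
    [MeasurableSpace α] [BorelSpace α] (μ : Measure α) [IsFiniteMeasure μ] {A : Set α}
    (hA : AnalyticSet A) : NullMeasurableSet A μ := by
  rw [AnalyticSet] at hA
  rcases hA with rfl | ⟨f, hf, rfl⟩
  · exact nullMeasurableSet_empty
  rcases eq_or_ne (μ (range f)) 0 with h0 | h0
  · exact .of_null h0
  obtain ⟨u, -, hu, hlim⟩ := exists_seq_strictMono_tendsto' (pos_iff_ne_zero.2 h0)
  choose L hLm hLs hLr using fun n => analytic_inner μ f hf (u n) (hu n).2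
  have hLU : MeasurableSet (⋃ n, L n) := .iUnion hLm
  have hle : μ (range f) ≤ μ (⋃ n, L n) :=
    le_of_tendsto' hlim fun n => (hLr n).trans (measure_mono (subset_iUnion _ _))
  exact hLU.nullMeasurableSet.congr (ae_eq_of_subset_of_measure_ge (iUnion_subset hLs) hle
    hLU.nullMeasurableSet (measure_ne_top _ _))

/-- A measurable subset of `α × β` is the preimage of a measurable subset of `(ℕ → ℕ) × β` under a
measurable map acting on the first factor only. -/
theorem exists_baire_factor {α β : Type*} [MeasurableSpace α] [MeasurableSpace β]
    {S : Set (α × β)} (hS : MeasurableSet S) :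
    ∃ (φ : α → ℕ → ℕ) (T : Set ((ℕ → ℕ) × β)), Measurable φ ∧ MeasurableSet T ∧
      S = Prod.map φ id ⁻¹' T := by
  classical
  rw [← generateFrom_prod] at hS
  induction S, hS using MeasurableSpace.generateFrom_induction with
  | hC S hS _ =>
    obtain ⟨A, hA, B, hB, rfl⟩ := hS
    refine ⟨fun a _ => if a ∈ A then 1 else 0, {x | x 0 = 1} ×ˢ B, ?_, ?_, ?_⟩
    · exact measurable_pi_lambda _ fun _ => Measurable.ite hA measurable_const measurable_const
    · exact (measurableSet_eq_fun (measurable_pi_apply 0) measurable_const).prod hB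
    · ext ⟨a, b⟩; simp
  | empty => exact ⟨fun _ _ => 0, ∅, measurable_const, .empty, by simp⟩
  | compl S _ ih =>
    obtain ⟨φ, T, hφ, hT, rfl⟩ := ih
    exact ⟨φ, Tᶜ, hφ, hT.compl, rfl⟩
  | iUnion S _ ih =>
    -- Countably many maps into `ℕ → ℕ` are merged into one by a pairing of the indices.
    choose φ T hφ hT hST using ih
    refine ⟨fun a n => φ n.unpair.1 a n.unpair.2,
      ⋃ i, Prod.map (fun x m => x (Nat.pair i m)) id ⁻¹' T i, ?_, ?_, ?_⟩
    · exact measurable_pi_lambda _ fun n => (measurable_pi_apply _).comp (hφ _)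
    · refine .iUnion fun i => (Measurable.prodMap ?_ measurable_id) (hT i)
      exact measurable_pi_lambda _ fun n => measurable_pi_apply _
    · rw [preimage_iUnion]
      refine iUnion_congr fun i => ?_
      rw [hST i, ← preimage_comp]
      congr 1
      ext ⟨a, b⟩ <;> simp

/-- Measurable projection theorem, for an arbitrary measurable base space and a standard Borel
fibre. -/
theorem nullMeasurable_proj {α β : Type*} [MeasurableSpace α] [MeasurableSpace β]
    [StandardBorelSpace β] (μ : Measure α) [IsFiniteMeasure μ]
    {S : Set (α × β)} (hS : MeasurableSet S) : NullMeasurableSet (Prod.fst '' S) μ := by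
  obtain ⟨φ, T, hφ, hT, rfl⟩ := exists_baire_factor hS
  have h1 : AnalyticSet (Prod.fst '' T) := hT.analyticSet_image measurable_fst
  have h2 := (analytic_nullMeasurable (μ.map φ) h1).preimage (hφ.quasiMeasurePreserving μ)
  convert h2 using 1
  ext a
  simp

/-- Measurable version `G n` of the tail suprema `⨆ s ≥ n, F a s`: the two agree off a null set
`N`, the same for all `n`, and `G n` is the upper bound `M` on `N`. -/
theorem exists_envelope {α : Type*} [MeasurableSpace α] (μ : Measure α) [IsFiniteMeasure μ]
    (F : α → ℝ → ℝ) (hF : Measurable fun q : α × ℝ => F q.1 q.2) (M : ℝ)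
    (hM : ∀ a t, F a t ≤ M) :
    ∃ (N : Set α) (G : ℕ → α → ℝ), μ N = 0 ∧ (∀ n, Measurable (G n)) ∧
      (∀ n, ∀ a ∈ N, G n a = M) ∧ ∀ n, ∀ a ∉ N, G n a = ⨆ s : Set.Ici (n : ℝ), F a s := by
  classical
  have hbdd : ∀ a (n : ℕ), BddAbove (range fun s : Set.Ici (n : ℝ) => F a s) := by
    rintro a n; exact ⟨M, by rintro _ ⟨s, rfl⟩; exact hM _ _⟩
  have hg : ∀ n : ℕ, AEMeasurable (fun a => ⨆ s : Set.Ici (n : ℝ), F a s) μ := by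
    intro n
    apply NullMeasurable.aemeasurable
    refine @measurable_of_Ioi ℝ (NullMeasurableSpace α μ) _ _ _ _ _ _ _ _ fun c => ?_
    have := nullMeasurable_proj μ (S := {q : α × ℝ | (n : ℝ) ≤ q.2 ∧ c < F q.1 q.2})
      ((measurableSet_le measurable_const measurable_snd).inter
        (measurableSet_lt measurable_const hF))
    change NullMeasurableSet _ μ
    have heq : (fun a => ⨆ s : Set.Ici (n : ℝ), F a s) ⁻¹' Ioi c =
        Prod.fst '' {q : α × ℝ | (n : ℝ) ≤ q.2 ∧ c < F q.1 q.2} := by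
      ext a
      simp [lt_ciSup_iff (hbdd a n)]
    rw [← heq] at this
    exact this
  have hnull : μ (⋃ n : ℕ, {a | ¬ (⨆ s : Set.Ici (n : ℝ), F a s) = (hg n).mk _ a}) = 0 :=
    measure_iUnion_null fun n => (hg n).ae_eq_mk
  set N := toMeasurable μ (⋃ n : ℕ, {a | ¬ (⨆ s : Set.Ici (n : ℝ), F a s) = (hg n).mk _ a})
  have hNm : MeasurableSet N := measurableSet_toMeasurable _ _
  refine ⟨N, fun n a => if a ∈ N then M else (hg n).mk _ a, ?_, ?_, ?_, ?_⟩
  · rw [measure_toMeasurable, hnull]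
  · exact fun n => Measurable.ite hNm measurable_const (hg n).measurable_mk
  · intro n a ha; simp [ha]
  · intro n a ha
    simp only [ha, if_false]
    by_contra h
    exact ha (subset_toMeasurable _ _ (mem_iUnion.2 ⟨n, fun h' => h h'.symm⟩))

/-- If `X t` takes values in `[0, M]` and tends to the constant `c` in `L²`, then anything
dominated by `X t` has `L^p` norm at most slightly more than `c` for large `t`. -/
theorem eventually_moment_le {Ω : Type*} [MeasurableSpace Ω] (P : Measure Ω)
    [IsProbabilityMeasure P] (X Y : ℝ → Ω → ℝ) (c M : ℝ) (hc : 0 ≤ c)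
    (hXm : ∀ t, AEStronglyMeasurable (X t) P) (hX0 : ∀ t ω, 0 ≤ X t ω) (hXM : ∀ t ω, X t ω ≤ M)
    (hlim : Tendsto (fun t => ∫ ω, (X t ω - c) ^ 2 ∂P) atTop (nhds 0))
    (hYX : ∀ᶠ t in atTop, ∀ ω, |Y t ω| ≤ X t ω) (p : ℝ) (hp : 1 ≤ p) (ε : ℝ) (hε : 0 < ε) :
    ∀ᶠ t in atTop, (∫ ω, |Y t ω| ^ p ∂P) ^ (1 / p) ≤ c + 2 * ε := by
  have hp0 : 0 < p := by linarith
  have hlt : (c + ε) ^ p < (c + 2 * ε) ^ p :=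
    Real.rpow_lt_rpow (by linarith) (by linarith) hp0
  have hlim2 : Tendsto (fun t => (c + ε) ^ p + M ^ p / ε ^ 2 * ∫ ω, (X t ω - c) ^ 2 ∂P) atTop
      (nhds ((c + ε) ^ p)) := by
    simpa using (hlim.const_mul (M ^ p / ε ^ 2)).const_add ((c + ε) ^ p)
  filter_upwards [hYX, hlim2.eventually_lt_const hlt] with t hY ht
  have hint : Integrable (fun ω => (X t ω - c) ^ 2) P := by
    refine Integrable.of_bound (((hXm t).sub aestronglyMeasurable_const).pow 2)
      ((M + c) ^ 2) (ae_of_all _ fun ω => ?_)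
    have h0 := hX0 t ω
    have h1 := hXM t ω
    rw [Real.norm_eq_abs, abs_of_nonneg (sq_nonneg _)]
    exact sq_le_sq' (by linarith) (by linarith)
  have hpt : ∀ ω, |Y t ω| ^ p ≤ (c + ε) ^ p + M ^ p / ε ^ 2 * (X t ω - c) ^ 2 := by
    intro ω
    have h0 := hX0 t ω
    have h1 := hXM t ω
    have hMp : 0 ≤ M ^ p := Real.rpow_nonneg (h0.trans h1) _
    refine (Real.rpow_le_rpow (abs_nonneg _) (hY ω) hp0.le).trans ?_
    -- Where `X > c + ε`, Chebyshev's factor `(X - c) ^ 2 / ε ^ 2` is at least `1`.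
    rcases le_total (X t ω) (c + ε) with h | h
    · exact (Real.rpow_le_rpow h0 h hp0.le).trans (le_add_of_nonneg_right (by positivity))
    · have h2 : 1 ≤ (X t ω - c) ^ 2 / ε ^ 2 := by
        rw [one_le_div (by positivity)]
        exact pow_le_pow_left₀ hε.le (by linarith) 2
      calc X t ω ^ p ≤ M ^ p * 1 := by
            rw [mul_one]; exact Real.rpow_le_rpow h0 h1 hp0.le
        _ ≤ M ^ p * ((X t ω - c) ^ 2 / ε ^ 2) := by gcongr
        _ = M ^ p / ε ^ 2 * (X t ω - c) ^ 2 := by ring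
        _ ≤ _ := le_add_of_nonneg_left (Real.rpow_nonneg (by linarith) _)
  have hle : ∫ ω, |Y t ω| ^ p ∂P ≤ (c + 2 * ε) ^ p := by
    refine le_trans ?_ ht.le
    refine (integral_mono_of_nonneg (ae_of_all _ fun ω => by positivity)
      ((integrable_const _).add (hint.const_mul _)) (ae_of_all _ hpt)).trans_eq ?_
    rw [integral_add' (integrable_const _) (hint.const_mul _), integral_const_mul]
    simp
  calc (∫ ω, |Y t ω| ^ p ∂P) ^ (1 / p) ≤ ((c + 2 * ε) ^ p) ^ (1 / p) :=
        Real.rpow_le_rpow (integral_nonneg fun ω => by positivity) hle (by positivity)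
    _ = c + 2 * ε := by
        rw [one_div, Real.rpow_rpow_inv (by linarith) hp0.ne']

theorem limsup_eq_ciInf_tail (f : ℝ → ℝ) (M : ℝ) (h0 : ∀ t, 0 ≤ f t) (hM : ∀ t, f t ≤ M) :
    Filter.limsup f atTop = ⨅ n : ℕ, ⨆ s : Set.Ici (n : ℝ), f s := by
  have hbdd : ∀ n : ℕ, BddAbove (range fun s : Set.Ici (n : ℝ) => f s) := by
    rintro n; exact ⟨M, by rintro _ ⟨s, rfl⟩; exact hM _⟩
  have hbelow : BddBelow (range fun n : ℕ => ⨆ s : Set.Ici (n : ℝ), f s) :=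
    ⟨0, by rintro _ ⟨n, rfl⟩; exact Real.iSup_nonneg fun s => h0 _⟩
  have hcob : IsCoboundedUnder (· ≤ ·) atTop f :=
    (isBoundedUnder_of ⟨0, h0⟩ : IsBoundedUnder (· ≥ ·) atTop f).isCoboundedUnder_le
  apply le_antisymm
  · refine le_ciInf fun n => limsup_le_of_le hcob ?_
    filter_upwards [eventually_ge_atTop (n : ℝ)] with t ht
    exact le_ciSup (hbdd n) ⟨t, ht⟩
  · refine le_of_forall_gt_imp_ge_of_dense fun a ha => ?_
    obtain ⟨T, hT⟩ := eventually_atTop.1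
      (eventually_lt_of_limsup_lt ha (isBoundedUnder_of ⟨M, hM⟩))
    obtain ⟨n, hn⟩ := exists_nat_ge T
    refine (ciInf_le hbelow n).trans (ciSup_le fun s => ?_)
    exact (hT s (hn.trans s.2)).le

/-- Lemma 2.8: an ergodicity-type reverse-Fatou lemma. Suppose the jointly measurable process
`ξ` satisfies the `L²` ergodic property: for every bounded measurable
`H : E × [0,1] × [0,∞) → ℝ` whose pointwise limit `H∞(y,u) = lim_{t→∞} H(y,u,t)` exists,
`∫_0^1 H(ξ_{(1-u)t}, u, t) du → ∫_0^1 ∫_E H∞ dν du` in `L²(P)`. Then for every nonnegative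
bounded measurable `F` and every `p ≥ 1`, writing `F̄(y,u) = limsup_{t→∞} F(y,u,t)`,
`limsup_{t→∞} ‖∫_0^1 F(ξ_{(1-u)t}, u, t) du‖_{L^p(P)} ≤ ∫_0^1 ∫_E F̄ dν du`. -/
theorem stmt_16 {Ω : Type*} [MeasurableSpace Ω] (P : Measure Ω) [IsProbabilityMeasure P]
    {E : Type*} [MeasurableSpace E] (ξ : ℝ → Ω → E)
    (hξ : Measurable fun q : ℝ × Ω => ξ q.1 q.2)
    (ν : Measure E) [IsProbabilityMeasure ν]
    (hyp : ∀ (H : E → ℝ → ℝ → ℝ) (Hlim : E → ℝ → ℝ),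
      Measurable (fun q : E × ℝ × ℝ => H q.1 q.2.1 q.2.2) →
      (∃ M : ℝ, ∀ y u t, |H y u t| ≤ M) →
      (∀ y : E, ∀ u ∈ Set.Icc (0:ℝ) 1,
        Filter.Tendsto (fun t => H y u t) Filter.atTop (nhds (Hlim y u))) →
      Filter.Tendsto
        (fun t => ∫ ω, ((∫ u in Set.Ioo (0:ℝ) 1, H (ξ ((1 - u) * t) ω) u t)
            - ∫ u in Set.Ioo (0:ℝ) 1, ∫ y, Hlim y u ∂ν) ^ 2 ∂P)
        Filter.atTop (nhds 0)) :
    ∀ F : E → ℝ → ℝ → ℝ,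
      Measurable (fun q : E × ℝ × ℝ => F q.1 q.2.1 q.2.2) →
      (∀ y u t, 0 ≤ F y u t) → (∃ M : ℝ, ∀ y u t, F y u t ≤ M) →
      ∀ p : ℝ, 1 ≤ p →
      Filter.limsup
        (fun t => (∫ ω, |∫ u in Set.Ioo (0:ℝ) 1, F (ξ ((1 - u) * t) ω) u t| ^ p ∂P) ^ (1 / p))
        Filter.atTop
        ≤ ∫ u in Set.Ioo (0:ℝ) 1, ∫ y, Filter.limsup (fun t => F y u t) Filter.atTop ∂ν := by
  intro F hF hF0 ⟨M, hM⟩ p hp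
  have hM0 : ∀ y : E, 0 ≤ M := fun y => (hF0 y 0 0).trans (hM y 0 0)
  have hM0' : 0 ≤ M := by
    obtain ⟨ω⟩ := nonempty_of_isProbabilityMeasure P
    exact hM0 (ξ 0 ω)
  -- The variable `u` comes first, so that a.e. statements disintegrate in the order of integration
  -- of the conclusion.
  let μ : Measure (ℝ × E) := (volume.restrict (Set.Ioo (0:ℝ) 1)).prod ν
  obtain ⟨N, G, hN0, hGm, hGN, hGN'⟩ := exists_envelope μ (fun q t => F q.2 q.1 t)
    (hF.comp (by fun_prop : Measurable fun q : (ℝ × E) × ℝ => (q.1.2, q.1.1, q.2))) M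
    (fun _ _ => hM _ _ _)
  have hbdd : ∀ (q : ℝ × E) (n : ℕ), BddAbove (range fun s : Set.Ici (n : ℝ) => F q.2 q.1 s) := by
    rintro q n; exact ⟨M, by rintro _ ⟨s, rfl⟩; exact hM _ _ _⟩
  have hG0 : ∀ n q, 0 ≤ G n q := by
    intro n q
    by_cases hq : q ∈ N
    · rw [hGN n q hq]; exact hM0'
    · rw [hGN' n q hq]; exact Real.iSup_nonneg fun s => hF0 _ _ _
  have hGM : ∀ n q, G n q ≤ M := by
    intro n q
    by_cases hq : q ∈ N
    · rw [hGN n q hq]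
    · rw [hGN' n q hq]; exact ciSup_le fun s => hM _ _ _
  have hGanti : ∀ q, Antitone fun n => G n q := by
    intro q a b hab
    by_cases hq : q ∈ N
    · simp [hGN _ q hq]
    · simp only [hGN' _ q hq]
      exact ciSup_le fun s => le_ciSup (hbdd q a)
        ⟨s.1, mem_Ici.2 (le_trans (Nat.cast_le.2 hab) (mem_Ici.1 s.2))⟩
  let H : E → ℝ → ℝ → ℝ := fun y u t => G ⌊t⌋₊ (u, y)
  have hH : Measurable fun q : E × ℝ × ℝ => H q.1 q.2.1 q.2.2 := by
    have h1 : Measurable fun q : ℕ × (ℝ × E) => G q.1 q.2 :=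
      measurable_from_prod_countable_right hGm
    exact h1.comp (((Nat.measurable_floor).comp (by fun_prop)).prodMk (by fun_prop) :
      Measurable fun q : E × ℝ × ℝ => (⌊q.2.2⌋₊, (q.2.1, q.1)))
  have hFH : ∀ y u t, 0 ≤ t → F y u t ≤ H y u t := by
    intro y u t ht
    by_cases hq : (u, y) ∈ N
    · simp only [H, hGN _ _ hq]; exact hM _ _ _
    · simp only [H, hGN' _ _ hq]
      exact le_ciSup (hbdd (u, y) ⌊t⌋₊) ⟨t, mem_Ici.2 (Nat.floor_le ht)⟩
  let c : ℝ := ∫ u in Set.Ioo (0:ℝ) 1, ∫ y, (⨅ n, G n (u, y)) ∂ν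
  have hlim := hyp H (fun y u => ⨅ n, G n (u, y)) hH
    ⟨M, fun y u t => abs_le.2 ⟨by have := hG0 ⌊t⌋₊ (u, y); simp only [H]; linarith, hGM _ _⟩⟩
    (fun y u _ => (tendsto_atTop_ciInf (hGanti (u, y))
      ⟨0, by rintro _ ⟨n, rfl⟩; exact hG0 _ _⟩).comp tendsto_nat_floor_atTop)
  -- The integral of the limit of `H` is that of the limsup, since the two agree off `N`.
  have hc : c = ∫ u in Set.Ioo (0:ℝ) 1, ∫ y, Filter.limsup (fun t => F y u t) Filter.atTop ∂ν := by
    have hae : ∀ᵐ q ∂μ, q ∉ N := measure_eq_zero_iff_ae_notMem.1 hN0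
    refine integral_congr_ae ?_
    filter_upwards [Measure.ae_ae_of_ae_prod hae] with u hu
    refine integral_congr_ae ?_
    filter_upwards [hu] with y hy
    rw [limsup_eq_ciInf_tail _ M (fun t => hF0 y u t) (fun t => hM y u t)]
    exact iInf_congr fun n => hGN' n _ hy
  have hc0 : 0 ≤ c := integral_nonneg fun u => integral_nonneg fun y =>
    Real.iInf_nonneg fun n => hG0 _ _
  rw [← hc]
  have hmeas : ∀ t, Measurable fun q : Ω × ℝ => H (ξ ((1 - q.2) * t) q.1) q.2 t := fun t =>
    hH.comp ((hξ.comp (by fun_prop : Measurable fun q : Ω × ℝ => ((1 - q.2) * t, q.1))).prodMk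
      (by fun_prop : Measurable fun q : Ω × ℝ => (q.2, t)))
  have hint : ∀ t ω, Integrable (fun u => H (ξ ((1 - u) * t) ω) u t)
      (volume.restrict (Set.Ioo (0:ℝ) 1)) := by
    intro t ω
    refine Integrable.of_bound ((hmeas t).comp measurable_prodMk_left).aestronglyMeasurable M
      (ae_of_all _ fun u => ?_)
    rw [Real.norm_eq_abs, abs_of_nonneg (hG0 _ _)]
    exact hGM _ _
  have hev := fun ε hε => eventually_moment_le P
    (fun t ω => ∫ u in Set.Ioo (0:ℝ) 1, H (ξ ((1 - u) * t) ω) u t)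
    (fun t ω => ∫ u in Set.Ioo (0:ℝ) 1, F (ξ ((1 - u) * t) ω) u t) c M hc0
    (fun t => ((hmeas t).stronglyMeasurable.integral_prod_right
      (ν := volume.restrict (Set.Ioo (0:ℝ) 1))).aestronglyMeasurable)
    (fun t ω => integral_nonneg fun u => hG0 _ _)
    (fun t ω => (integral_mono (hint t ω) (integrable_const M) fun u => hGM _ _).trans_eq
      (by simp))
    hlim
    (by
      filter_upwards [eventually_ge_atTop 0] with t ht ω
      rw [abs_of_nonneg (integral_nonneg fun u => hF0 _ _ _)]
      exact integral_mono_of_nonneg (ae_of_all _ fun u => hF0 _ _ _) (hint t ω)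
        (ae_of_all _ fun u => hFH _ _ _ ht))
    p hp ε hε
  have hcob : IsCoboundedUnder (· ≤ ·) atTop (fun t : ℝ =>
      (∫ ω, |∫ u in Set.Ioo (0:ℝ) 1, F (ξ ((1 - u) * t) ω) u t| ^ p ∂P) ^ (1 / p)) :=
    (isBoundedUnder_of ⟨0, fun t => Real.rpow_nonneg
      (integral_nonneg fun ω => by positivity) _⟩ :
      IsBoundedUnder (· ≥ ·) atTop _).isCoboundedUnder_le
  refine le_of_forall_pos_le_add fun ε hε => limsup_le_of_le hcob ?_
  filter_upwards [hev (ε / 2) (by linarith)] with t ht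
  linarith
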